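/- arXiv:2605.22451 — 4 statements merged into one kernel-verified Lean document; each statement's English description precedes it below -/
import Mathlib

section
/- Let f : ℝⁿ → ℝ be continuous with epigraph L := {(x,y) ∈ ℝⁿ × ℝ : f(x) ≤ y}, and let K ⊆ ℝⁿ × ℝ be a nonempty closed set with K ∩ L = ∅. If there exists a point (x₀,y₀) ∈ K with y₀ < f(x) for all x ∈ ℝⁿ, then for every x ∈ ℝⁿ there exists y ∈ ℝ with d((x,y),K) = d((x,y),L); moreover every such equidistant point (x,y) satisfies min{(|x−x₀|² + y₀² − u²)/(2(y₀−u)), y₀} ≤ y < f(x), where u := min{f(s) : |x−s| ≤ |x−x₀|}. -/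
open Metric Set

noncomputable section

/-- `ℝⁿ × ℝ` with the Euclidean (ℓ²) metric. -/
abbrev EucProd (n : ℕ) := WithLp 2 (EuclideanSpace ℝ (Fin n) × ℝ)

/-- The point of `ℝⁿ × ℝ` with first component `x` and last coordinate `y`. -/
def pt {n : ℕ} (x : EuclideanSpace ℝ (Fin n)) (y : ℝ) : EucProd n :=
  (WithLp.equiv 2 (EuclideanSpace ℝ (Fin n) × ℝ)).symm (x, y)

/-- The epigraph of `f : ℝⁿ → ℝ`, viewed as a subset of `ℝⁿ × ℝ`. -/
def epigraph {n : ℕ} (f : EuclideanSpace ℝ (Fin n) → ℝ) : Set (EucProd n) :=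
  {p | f ((WithLp.equiv 2 (EuclideanSpace ℝ (Fin n) × ℝ)) p).1 ≤
      ((WithLp.equiv 2 (EuclideanSpace ℝ (Fin n) × ℝ)) p).2}

/-!
Follow the vertical line over `x`. At height `f x` it meets the epigraph. Low enough, `(x₀, y₀)` is
nearer to `(x, y)` than every epigraph point `(s, t)`: if `|x - s| ≤ |x - x₀|` then `t ≥ u`, so
`(s, t)` is at distance at least `u - y`, and `(x₀, y₀)` is nearer than that for `y` below the
quotient; otherwise `s` is farther from `x` than `x₀` is, and `t > y₀`, so `(s, t)` is the farther
point as soon as `y < y₀`. The intermediate value theorem gives an equidistant point between the two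
regimes. None lies at or above height `f x`, since an equidistant point of the epigraph would lie in
the closed set `K`.
-/

open WithLp

section L2Prod

variable {α β : Type*} [PseudoMetricSpace α] [PseudoMetricSpace β]

instance properSpace_withLp_prod (p : ENNReal) [Fact (1 ≤ p)] [ProperSpace α] [ProperSpace β] :
    ProperSpace (WithLp p (α × β)) where
  isCompact_closedBall q r := by
    refine ((isCompact_closedBall (ofLp q) r).image
      (prod_continuous_toLp p α β)).of_isClosed_subset isClosed_closedBall fun a ha => ?_
    have hlip : dist (ofLp a) (ofLp q) ≤ dist a q := by
      simpa only [NNReal.coe_one, one_mul] using (prod_lipschitzWith_ofLp p α β).dist_le_mul a q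
    exact ⟨ofLp a, hlip.trans ha, rfl⟩

theorem dist_sq_eq_of_L2 (p q : WithLp 2 (α × β)) :
    dist p q ^ 2 = dist p.fst q.fst ^ 2 + dist p.snd q.snd ^ 2 := by
  rw [prod_dist_eq_add (by norm_num), ENNReal.toReal_ofNat, ← Real.sqrt_eq_rpow]
  simp only [Real.rpow_ofNat]
  exact Real.sq_sqrt (by positivity)

theorem dist_lt_dist_of_fst_lt_of_snd_le {p q r : WithLp 2 (α × β)}
    (hfst : dist p.fst q.fst < dist p.fst r.fst) (hsnd : dist p.snd q.snd ≤ dist p.snd r.snd) :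
    dist p q < dist p r := by
  refine lt_of_pow_lt_pow_left₀ 2 dist_nonneg ?_
  rw [dist_sq_eq_of_L2, dist_sq_eq_of_L2]
  exact add_lt_add_of_lt_of_le (by gcongr) (by gcongr)

end L2Prod

theorem notMem_of_infDist_eq_infDist {α : Type*} [PseudoMetricSpace α] {K L : Set α} {p : α}
    (hK : IsClosed K) (hKne : K.Nonempty) (hdisj : Disjoint K L)
    (h : infDist p K = infDist p L) : p ∉ L := fun hpL =>
  hdisj.notMem_of_mem_right hpL <|
    (hK.mem_iff_infDist_zero hKne).2 (h.trans (infDist_zero_of_mem hpL))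

section Epigraph

variable {X : Type*} {f : X → ℝ} {x x₀ : X} {y y₀ u : ℝ}

/-- The epigraph of `f` as a subset of the `ℓ²` product `WithLp 2 (X × ℝ)`; for Euclidean `X` it is
`epigraph f`. -/
def l2Epigraph (f : X → ℝ) : Set (WithLp 2 (X × ℝ)) :=
  {p | f p.fst ≤ p.snd}

theorem toLp_mem_l2Epigraph : toLp 2 (x, y) ∈ l2Epigraph f ↔ f x ≤ y :=
  Iff.rfl

theorem isClosed_l2Epigraph [TopologicalSpace X] (hf : LowerSemicontinuous f) :
    IsClosed (l2Epigraph f) :=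
  hf.isClosed_epigraph.preimage (prod_continuous_ofLp 2 X ℝ)

variable [PseudoMetricSpace X]

-- The quotient is the height at which `(x, y)` is equidistant from `(x₀, y₀)` and `(x, u)`.
theorem dist_toLp_lt_sub_iff (hy₀u : y₀ < u) :
    dist (toLp 2 (x, y)) (toLp 2 (x₀, y₀)) < u - y ↔
      y < (dist x x₀ ^ 2 + y₀ ^ 2 - u ^ 2) / (2 * (y₀ - u)) := by
  have hsq : dist (toLp 2 (x, y)) (toLp 2 (x₀, y₀)) ^ 2 = dist x x₀ ^ 2 + (y - y₀) ^ 2 := by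
    simp only [dist_sq_eq_of_L2, toLp_fst, toLp_snd, Real.dist_eq, sq_abs]
  rw [lt_div_iff_of_neg (by linarith)]
  constructor <;> intro h
  · have hlt_sq := pow_lt_pow_left₀ h dist_nonneg two_ne_zero
    linarith
  · have hyu : y < u := by nlinarith [sq_nonneg (dist x x₀)]
    refine lt_of_pow_lt_pow_left₀ 2 (sub_nonneg.2 hyu.le) ?_
    linarith

theorem dist_lt_dist_of_mem_l2Epigraph (hbelow : ∀ s, y₀ < f s) (hy₀u : y₀ < u)
    (hball : ∀ s ∈ closedBall x (dist x x₀), u ≤ f s)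
    (hy : y < min ((dist x x₀ ^ 2 + y₀ ^ 2 - u ^ 2) / (2 * (y₀ - u))) y₀)
    {q : WithLp 2 (X × ℝ)} (hq : q ∈ l2Epigraph f) :
    dist (toLp 2 (x, y)) (toLp 2 (x₀, y₀)) < dist (toLp 2 (x, y)) q := by
  obtain ⟨hy_quot, hyy₀⟩ := lt_min_iff.1 hy
  have hfq : f q.fst ≤ q.snd := hq
  rcases le_or_gt (dist x q.fst) (dist x x₀) with hnear | hfar
  · have hu_le : u ≤ q.snd := (hball q.fst (mem_closedBall'.2 hnear)).trans hfq
    calc dist (toLp 2 (x, y)) (toLp 2 (x₀, y₀))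
        < u - y := (dist_toLp_lt_sub_iff hy₀u).2 hy_quot
      _ ≤ q.snd - y := sub_le_sub_right hu_le y
      _ ≤ dist y q.snd := by rw [dist_comm]; exact le_abs_self _
      _ ≤ dist (toLp 2 (x, y)) q := dist_snd_le (toLp 2 (x, y)) q
  · have hy₀_le : y₀ ≤ q.snd := (hbelow q.fst).le.trans hfq
    exact dist_lt_dist_of_fst_lt_of_snd_le hfar
      (Real.dist_left_le_of_mem_uIcc (mem_uIcc_of_le hyy₀.le hy₀_le))

theorem infDist_lt_infDist_l2Epigraph [ProperSpace X] (hf : LowerSemicontinuous f)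
    {K : Set (WithLp 2 (X × ℝ))} (hK : toLp 2 (x₀, y₀) ∈ K) (hbelow : ∀ s, y₀ < f s)
    (hy₀u : y₀ < u) (hball : ∀ s ∈ closedBall x (dist x x₀), u ≤ f s)
    (hy : y < min ((dist x x₀ ^ 2 + y₀ ^ 2 - u ^ 2) / (2 * (y₀ - u))) y₀) :
    infDist (toLp 2 (x, y)) K < infDist (toLp 2 (x, y)) (l2Epigraph f) := by
  have hne : (l2Epigraph f).Nonempty := ⟨toLp 2 (x, f x), toLp_mem_l2Epigraph.2 le_rfl⟩
  obtain ⟨q, hq, hdist⟩ :=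
    (isClosed_l2Epigraph hf).exists_infDist_eq_dist hne (toLp 2 (x, y))
  rw [hdist]
  exact (infDist_le_dist_of_mem hK).trans_lt
    (dist_lt_dist_of_mem_l2Epigraph hbelow hy₀u hball hy hq)

theorem exists_infDist_eq_infDist_l2Epigraph {K : Set (WithLp 2 (X × ℝ))}
    (hy : infDist (toLp 2 (x, y)) K ≤ infDist (toLp 2 (x, y)) (l2Epigraph f)) :
    ∃ t : ℝ, infDist (toLp 2 (x, t)) K = infDist (toLp 2 (x, t)) (l2Epigraph f) := by
  have hline : Continuous fun t : ℝ => toLp 2 (x, t) :=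
    (prod_continuous_toLp 2 X ℝ).comp (Continuous.prodMk_right x)
  have htop : infDist (toLp 2 (x, f x)) (l2Epigraph f) = 0 :=
    infDist_zero_of_mem (toLp_mem_l2Epigraph.2 le_rfl)
  exact intermediate_value_univ₂ ((continuous_infDist_pt K).comp hline)
    ((continuous_infDist_pt _).comp hline) hy (htop.trans_le infDist_nonneg)

theorem stmt0_general [ProperSpace X] (hf : LowerSemicontinuous f)
    {K : Set (WithLp 2 (X × ℝ))} (hK : IsClosed K) (hdisj : Disjoint K (l2Epigraph f))
    (hx₀ : toLp 2 (x₀, y₀) ∈ K) (hbelow : ∀ s, y₀ < f s)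
    (hu : IsLeast (f '' closedBall x (dist x x₀)) u) :
    (∃ y : ℝ, infDist (toLp 2 (x, y)) K = infDist (toLp 2 (x, y)) (l2Epigraph f)) ∧
      ∀ y : ℝ, infDist (toLp 2 (x, y)) K = infDist (toLp 2 (x, y)) (l2Epigraph f) →
        min ((dist x x₀ ^ 2 + y₀ ^ 2 - u ^ 2) / (2 * (y₀ - u))) y₀ ≤ y ∧ y < f x := by
  obtain ⟨⟨s, -, hs⟩, hmin⟩ := hu
  have hy₀u : y₀ < u := hs ▸ hbelow s
  have hcloser (y : ℝ) (hy : y < min ((dist x x₀ ^ 2 + y₀ ^ 2 - u ^ 2) / (2 * (y₀ - u))) y₀) :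
      infDist (toLp 2 (x, y)) K < infDist (toLp 2 (x, y)) (l2Epigraph f) :=
    infDist_lt_infDist_l2Epigraph hf hx₀ hbelow hy₀u (forall_mem_image.1 hmin) hy
  refine ⟨exists_infDist_eq_infDist_l2Epigraph (hcloser _ (sub_one_lt _)).le, fun y hy => ⟨?_, ?_⟩⟩
  · exact le_of_not_gt fun hlt => (hcloser y hlt).ne hy
  · have hnotMem := notMem_of_infDist_eq_infDist hK ⟨_, hx₀⟩ hdisj hy
    rwa [toLp_mem_l2Epigraph, not_le] at hnotMem

end Epigraph

theorem stmt0 {n : ℕ} (f : EuclideanSpace ℝ (Fin n) → ℝ) (hf : Continuous f)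
    (L : Set (EucProd n)) (hL : L = epigraph f)
    (K : Set (EucProd n)) (hKcl : IsClosed K) (hKne : K.Nonempty)
    (hdisj : K ∩ L = ∅)
    (x₀ : EuclideanSpace ℝ (Fin n)) (y₀ : ℝ) (hx₀ : pt x₀ y₀ ∈ K)
    (hbelow : ∀ x, y₀ < f x)
    (x : EuclideanSpace ℝ (Fin n)) (u : ℝ)
    (hu : IsLeast (f '' Metric.closedBall x (dist x x₀)) u) :
    (∃ y : ℝ, Metric.infDist (pt x y) K = Metric.infDist (pt x y) L) ∧
      ∀ y : ℝ, Metric.infDist (pt x y) K = Metric.infDist (pt x y) L →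
        min ((dist x x₀ ^ 2 + y₀ ^ 2 - u ^ 2) / (2 * (y₀ - u))) y₀ ≤ y ∧ y < f x := by
  subst hL
  exact stmt0_general hf.lowerSemicontinuous hKcl (disjoint_iff_inter_eq_empty.2 hdisj) hx₀
    hbelow hu

end
end

section
/- Let f : ℝⁿ → ℝ be continuous and positive-valued with epigraph L, and let K ⊆ ℝⁿ × ℝ be a nonempty closed set disjoint from L containing a point (x₀,y₀) with y₀ ≤ 0. If for every x ∈ ℝⁿ there is exactly one G(x) ∈ ℝ with d((x,G(x)),K) = d((x,G(x)),L), then the function G : ℝⁿ → ℝ is continuous. -/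
/-!
Let `h p` be the distance from `p` to `K` minus the distance from `p` to `L`. At an equidistant
point, moving towards a nearest point of `K` makes `h` negative: the distance to `K` drops at unit
speed, and by strict convexity the distance to `L` could keep pace only if `K` and `L` had a
nearest point in common. So no zero of `h` is a local extremum. Hence `h` changes sign at its only
zero on each line `{x} × ℝ`: if it had, say, positive values on both sides, it would also have them
on all nearby lines, and one of those, meeting `{h < 0}` in between, would carry two zeros. Sign
changes persist on nearby lines, which traps the zeros there.
-/

open Metric Set

noncomputable section

open AffineMap Filter Topology

section UniqueZero

variable {α : Type*} [ConditionallyCompleteLinearOrder α] [TopologicalSpace α] [OrderTopology α]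
  [DenselyOrdered α]

theorem mem_Ioo_of_mul_neg_of_unique_zero {φ : α → ℝ} (hφ : Continuous φ) {c : α}
    (huniq : ∀ y, φ y = 0 → y = c) {a b : α} (hab : a ≤ b) (hsign : φ a * φ b < 0) :
    c ∈ Ioo a b := by
  obtain ⟨t, ht, hzero⟩ : (0 : ℝ) ∈ φ '' Ioo a b := by
    rcases mul_neg_iff.1 hsign with ⟨ha, hb⟩ | ⟨ha, hb⟩
    · exact intermediate_value_Ioo' hab hφ.continuousOn ⟨hb, ha⟩
    · exact intermediate_value_Ioo hab hφ.continuousOn ⟨ha, hb⟩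
  exact huniq t hzero ▸ ht

variable {X : Type*} [TopologicalSpace X] {h : X × α → ℝ} {g : X → α}

theorem isLocalMin_of_unique_zero_of_pos_of_pos (hh : Continuous h)
    (hg : ∀ x y, h (x, y) = 0 ↔ y = g x) {x : X} {a b : α} (ha : a < g x) (hb : g x < b)
    (hpos_a : 0 < h (x, a)) (hpos_b : 0 < h (x, b)) : IsLocalMin h (x, g x) := by
  have eventually_pos {y : α} (hy : 0 < h (x, y)) :
      ∀ᶠ q : X × α in 𝓝 (x, g x), 0 < h (q.1, y) :=
    ContinuousAt.eventually_lt continuousAt_const (by fun_prop) hy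
  filter_upwards [eventually_pos hpos_a, eventually_pos hpos_b,
    continuousAt_snd.eventually (Ioo_mem_nhds ha hb)] with ⟨x', y'⟩ hqa hqb hy'
  rw [(hg x _).2 rfl]
  by_contra! hneg
  have hline : Continuous fun y => h (x', y) := by fun_prop
  have huniq : ∀ y, h (x', y) = 0 → y = g x' := fun y => (hg x' y).1
  have hlt : g x' < y' :=
    (mem_Ioo_of_mul_neg_of_unique_zero hline huniq hy'.1.le (mul_neg_of_pos_of_neg hqa hneg)).2
  have hgt : y' < g x' :=
    (mem_Ioo_of_mul_neg_of_unique_zero hline huniq hy'.2.le (mul_neg_of_neg_of_pos hneg hqb)).1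
  exact lt_asymm hlt hgt

theorem mul_neg_of_unique_zero_of_not_isLocalExtr (hh : Continuous h)
    (hg : ∀ x y, h (x, y) = 0 ↔ y = g x) {x : X} (hextr : ¬IsLocalExtr h (x, g x))
    {a b : α} (ha : a < g x) (hb : g x < b) : h (x, a) * h (x, b) < 0 := by
  have hne : h (x, a) * h (x, b) ≠ 0 :=
    mul_ne_zero (fun h₀ => ha.ne ((hg x a).1 h₀)) fun h₀ => hb.ne' ((hg x b).1 h₀)
  by_contra! hsign
  rcases mul_pos_iff.1 (hsign.lt_of_ne' hne) with ⟨hpos_a, hpos_b⟩ | ⟨hneg_a, hneg_b⟩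
  · exact hextr (.inl (isLocalMin_of_unique_zero_of_pos_of_pos hh hg ha hb hpos_a hpos_b))
  · have hmin : IsLocalMin (fun q => -h q) (x, g x) :=
      isLocalMin_of_unique_zero_of_pos_of_pos hh.neg (fun x y => neg_eq_zero.trans (hg x y)) ha hb
        (neg_pos.2 hneg_a) (neg_pos.2 hneg_b)
    exact hextr (.inr (by simpa [IsLocalMax] using hmin.neg))

theorem continuous_of_unique_zero_of_not_isLocalExtr [NoMinOrder α] [NoMaxOrder α]
    (hh : Continuous h) (hg : ∀ x y, h (x, y) = 0 ↔ y = g x)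
    (hextr : ∀ x, ¬IsLocalExtr h (x, g x)) : Continuous g := by
  refine continuous_iff_continuousAt.2 fun x => (nhds_basis_Ioo (g x)).tendsto_right_iff.2 ?_
  rintro ⟨a, b⟩ ⟨ha, hb⟩
  have hsign : ∀ᶠ x' in 𝓝 x, h (x', a) * h (x', b) < 0 :=
    ContinuousAt.eventually_lt (by fun_prop) continuousAt_const
      (mul_neg_of_unique_zero_of_not_isLocalExtr hh hg (hextr x) ha hb)
  filter_upwards [hsign] with x' hx'
  exact mem_Ioo_of_mul_neg_of_unique_zero (by fun_prop) (fun y => (hg x' y).1) (ha.trans hb).le hx'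

end UniqueZero

section Equidistant

variable {V : Type*} [NormedAddCommGroup V] [NormedSpace ℝ V] [StrictConvexSpace ℝ V]

theorem eq_of_dist_lineMap_le {z p q : V} {s : ℝ} (hs : s ∈ Ioc (0 : ℝ) 1)
    (hpq : dist z p ≤ dist z q) (hle : dist (lineMap z p s) q ≤ (1 - s) * dist z p) : q = p := by
  have hleft : dist z (lineMap z p s) = s * dist z p := by
    rw [dist_left_lineMap, Real.norm_of_nonneg hs.1.le]
  have heq : dist z q = dist z p := by linarith [dist_triangle z (lineMap z p s) q]
  have hright : dist (lineMap z p s) q = (1 - s) * dist z q := by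
    rw [heq]
    linarith [dist_triangle z (lineMap z p s) q]
  have hlines : lineMap z p s = lineMap z q s :=
    eq_lineMap_of_dist_eq_mul_of_dist_eq_mul (heq ▸ hleft) hright
  simpa [lineMap_apply, hs.1.ne'] using hlines.symm

variable [ProperSpace V] {K L : Set V} {z : V}

theorem infDist_lineMap_lt_infDist (hL : IsClosed L) (hLne : L.Nonempty) {p : V} (hpK : p ∈ K)
    (hpL : p ∉ L) (hp : dist z p ≤ infDist z L) {s : ℝ} (hs : s ∈ Ioc (0 : ℝ) 1) :
    infDist (lineMap z p s) K < infDist (lineMap z p s) L := by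
  obtain ⟨q, hqL, hq⟩ := hL.exists_infDist_eq_dist hLne (lineMap z p s)
  rw [hq]
  by_contra! hle
  have hK : infDist (lineMap z p s) K ≤ (1 - s) * dist z p := by
    rw [← Real.norm_of_nonneg (sub_nonneg.2 hs.2), ← dist_lineMap_right]
    exact infDist_le_dist_of_mem hpK
  have hqp : q = p :=
    eq_of_dist_lineMap_le hs (hp.trans (infDist_le_dist_of_mem hqL)) (hle.trans hK)
  exact hpL (hqp ▸ hqL)

theorem not_isLocalMin_infDist_sub_infDist (hK : IsClosed K) (hKne : K.Nonempty)
    (hL : IsClosed L) (hLne : L.Nonempty) (hKL : Disjoint K L) (hz : infDist z K = infDist z L) :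
    ¬IsLocalMin (fun w => infDist w K - infDist w L) z := by
  intro hmin
  obtain ⟨p, hpK, hp⟩ := hK.exists_infDist_eq_dist hKne z
  have hlim : Tendsto (lineMap z p : ℝ → V) (𝓝[>] 0) (𝓝 z) := by
    simpa using ((lineMap_continuous (R := ℝ) (p := z) (q := p)).tendsto 0).mono_left
      nhdsWithin_le_nhds
  obtain ⟨s, hsmin, hs⟩ := ((hlim.eventually hmin).and (Ioc_mem_nhdsGT zero_lt_one)).exists
  have hlt := infDist_lineMap_lt_infDist hL hLne hpK (hKL.notMem_of_mem_left hpK)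
    (hp.symm.trans hz).le hs
  linarith

theorem not_isLocalExtr_infDist_sub_infDist (hK : IsClosed K) (hKne : K.Nonempty)
    (hL : IsClosed L) (hLne : L.Nonempty) (hKL : Disjoint K L) (hz : infDist z K = infDist z L) :
    ¬IsLocalExtr (fun w => infDist w K - infDist w L) z := by
  rintro (hmin | hmax)
  · exact not_isLocalMin_infDist_sub_infDist hK hKne hL hLne hKL hz hmin
  · refine not_isLocalMin_infDist_sub_infDist hL hLne hK hKne hKL.symm hz.symm ?_
    simpa [IsLocalMin] using hmax.neg

theorem stmt5_general {X : Type*} [TopologicalSpace X] (e : X × ℝ ≃ₜ V)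
    (hK : IsClosed K) (hKne : K.Nonempty) (hL : IsClosed L) (hLne : L.Nonempty)
    (hKL : Disjoint K L) {G : X → ℝ}
    (hG : ∀ x y, infDist (e (x, y)) K = infDist (e (x, y)) L ↔ y = G x) : Continuous G := by
  refine continuous_of_unique_zero_of_not_isLocalExtr
    (h := fun q => infDist (e q) K - infDist (e q) L) (by fun_prop)
    (fun x y => sub_eq_zero.trans (hG x y)) fun x hextr => ?_
  refine not_isLocalExtr_infDist_sub_infDist hK hKne hL hLne hKL ((hG x _).2 rfl) ?_
  have hsymm : Tendsto e.symm (𝓝 (e (x, G x))) (𝓝 (e.symm (e (x, G x)))) :=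
    e.symm.continuous.tendsto _
  rw [← e.symm_apply_apply (x, G x)] at hextr
  simpa [Function.comp_def, IsLocalExtr] using IsExtrFilter.comp_tendsto hextr hsymm

end Equidistant

theorem isClosed_epigraph {n : ℕ} {f : EuclideanSpace ℝ (Fin n) → ℝ}
    (hf : LowerSemicontinuous f) : IsClosed (epigraph f) :=
  hf.isClosed_epigraph.preimage (WithLp.prod_continuous_ofLp 2 _ _)

theorem epigraph_nonempty {n : ℕ} (f : EuclideanSpace ℝ (Fin n) → ℝ) : (epigraph f).Nonempty :=
  ⟨pt 0 (f 0), le_refl (f 0)⟩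

theorem stmt5 {n : ℕ} (f : EuclideanSpace ℝ (Fin n) → ℝ) (hf : Continuous f)
    (hfpos : ∀ x, 0 < f x)
    (L : Set (EucProd n)) (hL : L = epigraph f)
    (K : Set (EucProd n)) (hKcl : IsClosed K) (hKne : K.Nonempty)
    (hdisj : K ∩ L = ∅)
    (x₀ : EuclideanSpace ℝ (Fin n)) (y₀ : ℝ) (hx₀ : pt x₀ y₀ ∈ K) (hy₀ : y₀ ≤ 0)
    (G : EuclideanSpace ℝ (Fin n) → ℝ)
    (hG : ∀ x, Metric.infDist (pt x (G x)) K = Metric.infDist (pt x (G x)) L)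
    (huniq : ∀ x, ∀ y : ℝ,
      Metric.infDist (pt x y) K = Metric.infDist (pt x y) L → y = G x) :
    Continuous G := by
  subst hL
  exact stmt5_general (WithLp.homeomorphProd 2 (EuclideanSpace ℝ (Fin n)) ℝ).symm hKcl hKne
    (isClosed_epigraph hf.lowerSemicontinuous) (epigraph_nonempty f)
    (disjoint_iff_inter_eq_empty.2 hdisj) fun x y => ⟨huniq x y, fun h => h ▸ hG x⟩

end
end

section
/- Let f : ℝ → ℝ be positive-valued, convex and continuously differentiable, let R > 0, K ⊆ ℝ² the closed disk of radius R centered at the origin, and assume t² + f(t)² > R² for all t ∈ ℝ; let L be the epigraph of f. If (x,y) ∈ ℝ² is an equidistant point of K and L and t ∈ ℝ is a parameter at which the distance from (x,y) to L is attained at the graph point (t,f(t)), then α(t) := (t f'(t) − f(t))/√(1 + f'(t)²) < R and x = t + (f'(t)/(2√(1+f'(t)²)))·(t² + f(t)² − R²)/(R − α(t)), y = f(t) − (1/(2√(1+f'(t)²)))·(t² + f(t)² − R²)/(R − α(t)). -/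
open Metric Set

noncomputable section

/-- `ℝ²` with the Euclidean (ℓ²) metric. -/
abbrev EucPlane := WithLp 2 (ℝ × ℝ)

/-- The point of the Euclidean plane with coordinates `(a, b)`. -/
def pt2 (a b : ℝ) : EucPlane := (WithLp.equiv 2 (ℝ × ℝ)).symm (a, b)

/-- The epigraph of `f : ℝ → ℝ`, viewed as a subset of the Euclidean plane. -/
def epigraph2 (f : ℝ → ℝ) : Set EucPlane :=
  {p | f ((WithLp.equiv 2 (ℝ × ℝ)) p).1 ≤ ((WithLp.equiv 2 (ℝ × ℝ)) p).2}

/-!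
A nearest point `q = (t, f t)` of the epigraph to `p` is a minimum of the distance to `p` along the
graph, so Fermat's condition puts `p` on the normal line of the graph at `q`; as `p` cannot lie
above the graph, `p = q + d • ν` with `ν` the downward unit normal and `d = |p - q|`.  If `p` also
has distance `d` from the disk, then `‖q + d • ν‖ = R + d`.  Squaring cancels `d ^ 2` and leaves
`‖q‖ ^ 2 - R ^ 2 = 2 * d * (R - ⟪q, ν⟫)`, a linear equation for `d`, in which `⟪q, ν⟫ = α t`.
-/

section Ball

theorem infDist_closedBall_eq_max {E : Type*} [SeminormedAddCommGroup E] [NormedSpace ℝ E]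
    (p c : E) {R : ℝ} (hR : 0 ≤ R) : infDist p (closedBall c R) = max (dist p c - R) 0 := by
  rw [infDist, ← cthickening_singleton c hR, infEDist_cthickening, infEDist_singleton, edist_dist,
    ← ENNReal.ofReal_sub _ hR, ENNReal.toReal_ofReal']

variable {E : Type*} [SeminormedAddCommGroup E] [InnerProductSpace ℝ E]

theorem norm_add_smul_sq_of_norm_eq_one (v : E) {ν : E} (hν : ‖ν‖ = 1) (s : ℝ) :
    ‖v + s • ν‖ ^ 2 = ‖v‖ ^ 2 + 2 * s * inner ℝ v ν + s ^ 2 := by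
  rw [norm_add_sq_real, real_inner_smul_right, norm_smul, hν, mul_one, Real.norm_eq_abs, sq_abs,
    mul_assoc]

theorem norm_sub_sq_sub_sq_eq_of_infDist_closedBall_eq {q c ν : E} {R s : ℝ} (hR : 0 ≤ R)
    (hν : ‖ν‖ = 1) (hq : R < ‖q - c‖) (hs : infDist (q + s • ν) (closedBall c R) = s) :
    ‖q - c‖ ^ 2 - R ^ 2 = 2 * s * (R - inner ℝ (q - c) ν) := by
  rw [infDist_closedBall_eq_max _ _ hR, dist_eq_norm, add_sub_right_comm] at hs
  have norm_eq : ‖q - c + s • ν‖ = R + s := by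
    rcases max_cases (‖q - c + s • ν‖ - R) 0 with ⟨hmax, -⟩ | ⟨hmax, hle⟩
    · linarith
    · have hs0 : s = 0 := hs.symm.trans hmax
      rw [hs0, zero_smul, add_zero] at hle
      linarith
  have hsq := norm_add_smul_sq_of_norm_eq_one (q - c) hν s
  rw [norm_eq] at hsq
  linear_combination -hsq

theorem inner_lt_and_eq_div_of_infDist_closedBall_eq {q c ν : E} {R s : ℝ} (hR : 0 ≤ R)
    (hν : ‖ν‖ = 1) (hq : R < ‖q - c‖) (hs : infDist (q + s • ν) (closedBall c R) = s) :
    inner ℝ (q - c) ν < R ∧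
      s = (‖q - c‖ ^ 2 - R ^ 2) / (2 * (R - inner ℝ (q - c) ν)) := by
  have key := norm_sub_sq_sub_sq_eq_of_infDist_closedBall_eq hR hν hq hs
  have hs0 : 0 ≤ s := hs ▸ infDist_nonneg
  have hpos : 0 < 2 * s * (R - inner ℝ (q - c) ν) :=
    key ▸ sub_pos.2 (pow_lt_pow_left₀ hq hR two_ne_zero)
  have hgap : 0 < R - inner ℝ (q - c) ν := pos_of_mul_pos_right hpos (by positivity)
  refine ⟨sub_pos.1 hgap, ?_⟩
  rw [key]
  field_simp

end Ball

section Plane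

theorem pt2_fst (a b : ℝ) : (pt2 a b).fst = a := rfl

theorem pt2_snd (a b : ℝ) : (pt2 a b).snd = b := rfl

theorem pt2_mem_epigraph2 {f : ℝ → ℝ} {a b : ℝ} : pt2 a b ∈ epigraph2 f ↔ f a ≤ b := Iff.rfl

theorem pt2_add_smul_pt2 (a b s u v : ℝ) :
    pt2 a b + s • pt2 u v = pt2 (a + s * u) (b + s * v) := rfl

theorem norm_pt2_sq (a b : ℝ) : ‖pt2 a b‖ ^ 2 = a ^ 2 + b ^ 2 := by
  simp only [WithLp.prod_norm_sq_eq_of_L2, pt2_fst, pt2_snd, Real.norm_eq_abs, sq_abs]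

theorem inner_pt2 (a b c d : ℝ) : inner ℝ (pt2 a b) (pt2 c d) = a * c + b * d := by
  simp only [WithLp.prod_inner_apply, WithLp.ofLp_fst, WithLp.ofLp_snd, pt2_fst, pt2_snd,
    RCLike.inner_apply', conj_trivial]

theorem dist_pt2_sq (a b c d : ℝ) :
    dist (pt2 a b) (pt2 c d) ^ 2 = (a - c) ^ 2 + (b - d) ^ 2 := by
  rw [dist_eq_norm, ← norm_pt2_sq]
  rfl

/-- The unit normal, pointing below the graph, of a line of slope `m`.  Its inner product with a
point of the line is the signed distance of the line from the origin. -/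
def downwardUnitNormal (m : ℝ) : EucPlane := (√(1 + m ^ 2))⁻¹ • pt2 m (-1)

theorem norm_pt2_neg_one (m : ℝ) : ‖pt2 m (-1)‖ = √(1 + m ^ 2) := by
  rw [← Real.sqrt_sq (norm_nonneg (pt2 m (-1))), norm_pt2_sq, neg_one_sq, add_comm]

theorem norm_downwardUnitNormal (m : ℝ) : ‖downwardUnitNormal m‖ = 1 := by
  have hw : 0 < √(1 + m ^ 2) := by positivity
  rw [downwardUnitNormal, norm_smul, norm_pt2_neg_one, Real.norm_of_nonneg (by positivity),
    inv_mul_cancel₀ hw.ne']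

theorem inner_pt2_downwardUnitNormal (a b m : ℝ) :
    inner ℝ (pt2 a b) (downwardUnitNormal m) = (a * m - b) / √(1 + m ^ 2) := by
  rw [downwardUnitNormal, real_inner_smul_right, inner_pt2]
  ring

end Plane

section NearestPoint

variable {f : ℝ → ℝ} {m x y t : ℝ}

theorem sq_add_sq_le_of_infDist_epigraph2_eq
    (hatt : infDist (pt2 x y) (epigraph2 f) = dist (pt2 x y) (pt2 t (f t)))
    {a b : ℝ} (hab : f a ≤ b) :
    (x - t) ^ 2 + (y - f t) ^ 2 ≤ (x - a) ^ 2 + (y - b) ^ 2 := by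
  rw [← dist_pt2_sq, ← dist_pt2_sq, ← hatt]
  exact pow_le_pow_left₀ infDist_nonneg (infDist_le_dist_of_mem (pt2_mem_epigraph2.2 hab)) 2

theorem le_of_infDist_epigraph2_eq
    (hatt : infDist (pt2 x y) (epigraph2 f) = dist (pt2 x y) (pt2 t (f t))) : y ≤ f t := by
  by_contra! hy
  have hvert := sq_add_sq_le_of_infDist_epigraph2_eq hatt hy.le
  have : 0 < (y - f t) ^ 2 := pow_pos (sub_pos.2 hy) 2
  linarith

theorem sub_eq_slope_mul_of_infDist_epigraph2_eq (hf : HasDerivAt f m t)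
    (hatt : infDist (pt2 x y) (epigraph2 f) = dist (pt2 x y) (pt2 t (f t))) :
    x - t = m * (f t - y) := by
  have hmin : IsLocalMin (fun s => (x - s) ^ 2 + (y - f s) ^ 2) t :=
    Filter.Eventually.of_forall fun s => sq_add_sq_le_of_infDist_epigraph2_eq hatt (le_refl (f s))
  have hderiv : HasDerivAt (fun s => (x - s) ^ 2 + (y - f s) ^ 2)
      (2 * (x - t) * -1 + 2 * (y - f t) * -m) t :=
    ((((hasDerivAt_id' t).const_sub x).pow 2).add ((hf.const_sub y).pow 2)).congr_deriv (by simp)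
  linarith [hmin.hasDerivAt_eq_zero hderiv]

theorem pt2_eq_add_infDist_smul_downwardUnitNormal (hf : HasDerivAt f m t)
    (hatt : infDist (pt2 x y) (epigraph2 f) = dist (pt2 x y) (pt2 t (f t))) :
    pt2 x y = pt2 t (f t) + infDist (pt2 x y) (epigraph2 f) • downwardUnitNormal m := by
  have hxt := sub_eq_slope_mul_of_infDist_epigraph2_eq hf hatt
  have hyf : 0 ≤ f t - y := sub_nonneg.2 (le_of_infDist_epigraph2_eq hatt)
  have hw : 0 < √(1 + m ^ 2) := by positivity
  have hdisp : pt2 x y = pt2 t (f t) + (f t - y) • pt2 m (-1) := by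
    rw [pt2_add_smul_pt2]
    congr 1 <;> linarith
  have hdist : infDist (pt2 x y) (epigraph2 f) = (f t - y) * √(1 + m ^ 2) := by
    rw [hatt, dist_eq_norm, hdisp, add_sub_cancel_left, norm_smul, norm_pt2_neg_one,
      Real.norm_of_nonneg hyf]
  rw [hdist, downwardUnitNormal, smul_smul, mul_inv_cancel_right₀ hw.ne', ← hdisp]

end NearestPoint

theorem stmt12_general {f : ℝ → ℝ} {R m a x y t : ℝ} (hR : 0 ≤ R) (hf : HasDerivAt f m t)
    (hsep : R ^ 2 < t ^ 2 + f t ^ 2) (ha : a = (t * m - f t) / √(1 + m ^ 2))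
    (hequi : infDist (pt2 x y) (closedBall 0 R) = infDist (pt2 x y) (epigraph2 f))
    (hatt : infDist (pt2 x y) (epigraph2 f) = dist (pt2 x y) (pt2 t (f t))) :
    a < R ∧
      x = t + m / (2 * √(1 + m ^ 2)) * ((t ^ 2 + f t ^ 2 - R ^ 2) / (R - a)) ∧
      y = f t - 1 / (2 * √(1 + m ^ 2)) * ((t ^ 2 + f t ^ 2 - R ^ 2) / (R - a)) := by
  have hp := pt2_eq_add_infDist_smul_downwardUnitNormal hf hatt
  generalize infDist (pt2 x y) (epigraph2 f) = d at hequi hp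
  have hq : R < ‖pt2 t (f t) - 0‖ := by
    rw [sub_zero]
    exact lt_of_pow_lt_pow_left₀ 2 (norm_nonneg _) (norm_pt2_sq t (f t) ▸ hsep)
  obtain ⟨haR, hd⟩ := inner_lt_and_eq_div_of_infDist_closedBall_eq hR
    (norm_downwardUnitNormal m) hq (hp ▸ hequi)
  rw [sub_zero, inner_pt2_downwardUnitNormal, ← ha] at haR hd
  rw [norm_pt2_sq] at hd
  rw [downwardUnitNormal, smul_smul, pt2_add_smul_pt2] at hp
  have hx : x = t + d * (√(1 + m ^ 2))⁻¹ * m := congrArg WithLp.fst hp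
  have hy : y = f t + d * (√(1 + m ^ 2))⁻¹ * -1 := congrArg WithLp.snd hp
  refine ⟨haR, ?_, ?_⟩
  · rw [hx, hd]
    field_simp
  · rw [hy, hd]
    field_simp
    ring

theorem stmt12 (f : ℝ → ℝ) (hfpos : ∀ t, 0 < f t)
    (hfconv : ConvexOn ℝ Set.univ f) (hfC1 : ContDiff ℝ 1 f)
    (R : ℝ) (hR : 0 < R)
    (K : Set EucPlane) (hK : K = Metric.closedBall (0 : EucPlane) R)
    (L : Set EucPlane) (hL : L = epigraph2 f)
    (hsep : ∀ t : ℝ, R ^ 2 < t ^ 2 + f t ^ 2)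
    (α : ℝ → ℝ)
    (hα : ∀ s : ℝ, α s = (s * deriv f s - f s) / Real.sqrt (1 + deriv f s ^ 2))
    (x y t : ℝ)
    (hequi : Metric.infDist (pt2 x y) K = Metric.infDist (pt2 x y) L)
    (hatt : Metric.infDist (pt2 x y) L = dist (pt2 x y) (pt2 t (f t))) :
    α t < R ∧
      x = t + deriv f t / (2 * Real.sqrt (1 + deriv f t ^ 2)) *
            ((t ^ 2 + f t ^ 2 - R ^ 2) / (R - α t)) ∧
      y = f t - 1 / (2 * Real.sqrt (1 + deriv f t ^ 2)) *
            ((t ^ 2 + f t ^ 2 - R ^ 2) / (R - α t)) := by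
  subst hK hL
  exact stmt12_general hR.le (hfC1.differentiable one_ne_zero t).hasDerivAt (hsep t) (hα t) hequi
    hatt

end
end

section
/- Let f : ℝ → ℝ be positive-valued, convex and continuously differentiable, let R > 0, and define α(t) := (t f'(t) − f(t))/√(1 + f'(t)²). If t₀ > 0 satisfies α(t₀) ≥ R, then α(t) ≥ α(t₀) for every t > t₀. -/
/-!
For a fixed point `(x, y)`, the signed distance from the origin to the line of slope `m` through
`(x, y)` has `m`-derivative `(x + y * m) / √(1 + m ^ 2) ^ 3`, so it increases with `m` as long as
the vectors `(x, y)` and `(1, m)` make no obtuse angle. This holds at `t₀`: as `t₀`, `f t₀` and the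
signed distance are positive, the slope is positive too. Let `t₀ < t` and move the tangent line at
`t₀` to the one at `t` in two steps: first turn it about `(t₀, f t₀)` to the larger slope at `t`,
then translate it down to the tangent at `t`, which lies below the graph. Neither step decreases
the distance.
-/

open Metric Set

noncomputable section

/-- The signed distance from the origin to the line of slope `m` through `(x, y)`, counted positive
when the origin lies above the line. -/
def lineSignedDist (x y m : ℝ) : ℝ :=
  (x * m - y) / √(1 + m ^ 2)

/-- `m` is a subgradient at `a` of the restriction of `f` to `s`. This is the slope of a
supporting line, which replaces the tangent line where `f` need not be differentiable. -/
def HasSubgradientWithinAt (f : ℝ → ℝ) (m : ℝ) (s : Set ℝ) (a : ℝ) : Prop :=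
  ∀ b ∈ s, f a + m * (b - a) ≤ f b

namespace HasSubgradientWithinAt

variable {f : ℝ → ℝ} {s : Set ℝ} {a b m n : ℝ}

theorem of_convexOn (hf : ConvexOn ℝ s f) (ha : a ∈ s) (hd : DifferentiableAt ℝ f a) :
    HasSubgradientWithinAt f (deriv f a) s a := by
  intro b hb
  rcases lt_trichotomy a b with hab | rfl | hba
  · have hslope := hf.deriv_le_slope ha hb hab hd
    rw [slope_def_field, le_div_iff₀ (sub_pos.2 hab)] at hslope
    linarith
  · simp
  · have hslope := hf.slope_le_deriv hb ha hba hd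
    rw [slope_def_field, div_le_iff₀ (sub_pos.2 hba)] at hslope
    linarith

theorem slope_le_slope (hm : HasSubgradientWithinAt f m s a)
    (hn : HasSubgradientWithinAt f n s b) (ha : a ∈ s) (hb : b ∈ s) (hab : a < b) : m ≤ n := by
  have hmul : m * (b - a) ≤ n * (b - a) := by linarith [hm b hb, hn a ha]
  exact le_of_mul_le_mul_right hmul (sub_pos.2 hab)

end HasSubgradientWithinAt

section lineSignedDist

variable {x y m : ℝ}

theorem sqrt_one_add_sq_pos (m : ℝ) : 0 < √(1 + m ^ 2) :=
  Real.sqrt_pos.2 (by positivity)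

theorem lineSignedDist_le_lineSignedDist_iff {x' y' : ℝ} :
    lineSignedDist x y m ≤ lineSignedDist x' y' m ↔ y' + m * (x - x') ≤ y := by
  rw [lineSignedDist, lineSignedDist, div_le_div_iff_of_pos_right (sqrt_one_add_sq_pos m)]
  constructor <;> intro h <;> linarith

theorem hasDerivAt_lineSignedDist (x y m : ℝ) :
    HasDerivAt (lineSignedDist x y) ((x + y * m) / √(1 + m ^ 2) ^ 3) m := by
  have hroot_pos := sqrt_one_add_sq_pos m
  have hroot_sq : √(1 + m ^ 2) ^ 2 = 1 + m ^ 2 := Real.sq_sqrt (by positivity)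
  have hnum : HasDerivAt (fun m ↦ x * m - y) x m := by
    simpa using ((hasDerivAt_id m).const_mul x).sub_const y
  have hroot : HasDerivAt (fun m ↦ √(1 + m ^ 2)) (m / √(1 + m ^ 2)) m := by
    refine (((hasDerivAt_pow 2 m).const_add 1).sqrt (by positivity)).congr_deriv ?_
    simp only [Nat.cast_ofNat, Nat.add_one_sub_one, pow_one]
    field_simp
  refine (hnum.div hroot hroot_pos.ne').congr_deriv ?_
  field_simp
  rw [hroot_sq]
  ring

theorem monotoneOn_lineSignedDist (x y : ℝ) :
    MonotoneOn (lineSignedDist x y) {m | 0 ≤ x + y * m} := by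
  have hconvex : Convex ℝ {m : ℝ | 0 ≤ x + y * m} := by
    intro m hm n hn u v hu hv huv
    calc
      0 ≤ u * (x + y * m) + v * (x + y * n) :=
        add_nonneg (mul_nonneg hu hm) (mul_nonneg hv hn)
      _ = x + y * (u • m + v • n) := by
        simp only [smul_eq_mul]
        linear_combination x * huv
  refine monotoneOn_of_hasDerivWithinAt_nonneg hconvex
    (fun m _ ↦ (hasDerivAt_lineSignedDist x y m).continuousAt.continuousWithinAt)
    (fun m _ ↦ (hasDerivAt_lineSignedDist x y m).hasDerivWithinAt) fun m hm ↦ ?_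
  have hangle : 0 ≤ x + y * m := interior_subset (s := {m | 0 ≤ x + y * m}) hm
  positivity

theorem add_mul_nonneg_of_lineSignedDist_nonneg (hx : 0 < x) (hy : 0 ≤ y)
    (h : 0 ≤ lineSignedDist x y m) : 0 ≤ x + y * m := by
  have hnum : 0 ≤ x * m - y := by
    simpa only [zero_mul] using (le_div_iff₀ (sqrt_one_add_sq_pos m)).1 h
  have hm : 0 ≤ m := nonneg_of_mul_nonneg_right (by linarith) hx
  positivity

end lineSignedDist

theorem stmt13_general {f : ℝ → ℝ} {s : Set ℝ} {t₀ t m₀ m : ℝ} (ht₀ : t₀ ∈ s) (ht : t ∈ s)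
    (hlt : t₀ < t) (hm₀ : HasSubgradientWithinAt f m₀ s t₀) (hm : HasSubgradientWithinAt f m s t)
    (hf₀ : 0 ≤ f t₀) (hangle : 0 ≤ t₀ + f t₀ * m₀) :
    lineSignedDist t₀ (f t₀) m₀ ≤ lineSignedDist t (f t) m := by
  have hslope : m₀ ≤ m := hm₀.slope_le_slope hm ht₀ ht hlt
  have hangle' : 0 ≤ t₀ + f t₀ * m := hangle.trans (by gcongr)
  calc
    lineSignedDist t₀ (f t₀) m₀ ≤ lineSignedDist t₀ (f t₀) m :=
      monotoneOn_lineSignedDist t₀ (f t₀) hangle hangle' hslope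
    _ ≤ lineSignedDist t (f t) m := lineSignedDist_le_lineSignedDist_iff.2 (hm t₀ ht₀)

theorem stmt13 (f : ℝ → ℝ) (hfpos : ∀ t, 0 < f t)
    (hfconv : ConvexOn ℝ Set.univ f) (hfC1 : ContDiff ℝ 1 f)
    (R : ℝ) (hR : 0 < R)
    (α : ℝ → ℝ)
    (hα : ∀ s : ℝ, α s = (s * deriv f s - f s) / Real.sqrt (1 + deriv f s ^ 2))
    (t₀ : ℝ) (ht₀ : 0 < t₀) (hcrit : R ≤ α t₀) :
    ∀ t : ℝ, t₀ < t → α t₀ ≤ α t := by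
  obtain rfl : α = fun s ↦ lineSignedDist s (f s) (deriv f s) := funext hα
  have hsub (t : ℝ) : HasSubgradientWithinAt f (deriv f t) univ t :=
    .of_convexOn hfconv (mem_univ t) (hfC1.differentiable one_ne_zero t)
  exact fun t hlt ↦ stmt13_general (mem_univ t₀) (mem_univ t) hlt (hsub t₀) (hsub t) (hfpos t₀).le
    (add_mul_nonneg_of_lineSignedDist_nonneg ht₀ (hfpos t₀).le (hR.le.trans hcrit))

end
end
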